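/- Criticality with potential term: let c_p := (p/(p−1))^{p−1}, let V : Ω → ℝ lie in M^q_loc(p;Ω), assume Q_{p,A,c_pV} is subcritical in Ω, let φ ∈ C_c^∞(Ω) be nonnegative and not identically 0, and let G ∈ C^{1,α}(Ω) (α ∈ (0,1]) be a positive weak solution of Q_{p,A,c_pV}(u) = φ in Ω satisfying: G → 0 at infinity in Ω, ∫_Ω V G^{p−1} dx < 0, and ∫_Ω |V| G^{p−1} dx < ∞. Set W := ((p−1)/p)^p (|∇G|_A / G)^p + ((p−1)/p)^{p−1} φ G^{1−p}. Then Q_{p,A,V−W} admits a null-sequence in Ω: there exist nonnegative u_k ∈ C_c^∞(Ω), a nonempty open set B with compact closure in Ω, and c > 0 such that c ≤ ∫_B u_k^p dx ≤ c⁻¹ for all k, and ∫_Ω (|∇u_k|_A^p + (V−W)|u_k|^p) dx → 0 as k → ∞. -/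

import Mathlib

/-!
Write `γ = (p-1)/p`. The function `G^γ` solves `Q_{p,A,V-W} = 0` formally, and the null-sequence is
`G^γ χ(G)` for logarithmic cutoffs `χ` that vanish near `0`; these are compactly supported because
`G → 0` at infinity. Everything rests on testing the equation of `G` with functions `F(G)`
(`identity_G`), which gives
`∫ F'(G) |∇G|_A^p + c_p ∫ V G^{p-1} F(G) = ∫ φ F(G)` and makes the coarea formula unnecessary.

With `F = χ^p` the potential terms cancel, and the energy of `G^γ χ(G)` becomes `∫ D(G) |∇G|_A^p`,
where, for `b = t χ'(t)`,
`t D(t) = (γ χ + b)^p - (γ χ)^p - p (γ χ)^{p-1} b`.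
This is the Taylor remainder of `t ↦ t^p`, which is `o(b)` uniformly (`rpow_remainder`), so
`|D| ≤ ω χ'` with `ω` small when `t χ'(t)` is uniformly small (`density_bound`,
`exists_log_cutoff`). The choice `F = χ` then bounds the energy by
`ω (∫ φ + c_p ∫ |V| G^{p-1})` (`energy_bound`).

Since `G` is only `C¹`, mollification (`exists_mollification`) is used twice: to extend the weak
formulation to `C¹` test functions (`weak_extend`) and to replace `G^γ χ(G)` by a smooth function
with nearly the same energy (`exists_testFun_energy`).
-/

open MeasureTheory Set Filter Topology

noncomputable section

variable {n : ℕ}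

/-- The `A`-inner product `⟨A(x)ξ, η⟩`. -/
def aInner (A : EuclideanSpace ℝ (Fin n) → Matrix (Fin n) (Fin n) ℝ)
    (x ξ η : EuclideanSpace ℝ (Fin n)) : ℝ :=
  ∑ i, ∑ j, A x i j * ξ j * η i

/-- `|ξ|_A := ⟨A(x)ξ, ξ⟩^{1/2}`. -/
def aNorm (A : EuclideanSpace ℝ (Fin n) → Matrix (Fin n) (Fin n) ℝ)
    (x ξ : EuclideanSpace ℝ (Fin n)) : ℝ :=
  Real.sqrt (aInner A x ξ ξ)

/-- Assumptions on the matrix field `A`: symmetric, positive definite, locally Hölder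
continuous, and locally uniformly elliptic on `Ω`. -/
structure IsEllipticMatrix (Ω : Set (EuclideanSpace ℝ (Fin n)))
    (A : EuclideanSpace ℝ (Fin n) → Matrix (Fin n) (Fin n) ℝ) : Prop where
  symm : ∀ x ∈ Ω, (A x).IsSymm
  posdef : ∀ x ∈ Ω, ∀ ξ : EuclideanSpace ℝ (Fin n), ξ ≠ 0 → 0 < aInner A x ξ ξ
  locHolder : ∀ K ⊆ Ω, IsCompact K → ∃ C > (0:ℝ), ∃ α ∈ Set.Ioc (0:ℝ) 1,
      ∀ x ∈ K, ∀ y ∈ K, ∀ i j, |A x i j - A y i j| ≤ C * dist x y ^ α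
  elliptic : ∀ K ⊆ Ω, IsCompact K → ∃ Θ > (0:ℝ), ∀ x ∈ K, ∀ ξ : EuclideanSpace ℝ (Fin n),
      Θ⁻¹ * ‖ξ‖ ^ 2 ≤ aInner A x ξ ξ ∧ aInner A x ξ ξ ≤ Θ * ‖ξ‖ ^ 2

/-- Test functions: `C_c^∞` functions with support in `U`. -/
def IsTestFun (U : Set (EuclideanSpace ℝ (Fin n))) (ψ : EuclideanSpace ℝ (Fin n) → ℝ) : Prop :=
  ContDiff ℝ (⊤ : ℕ∞) ψ ∧ HasCompactSupport ψ ∧ tsupport ψ ⊆ U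

/-- Weakly `(p,A)`-harmonic in `U`. -/
def IsPAHarmonic (A : EuclideanSpace ℝ (Fin n) → Matrix (Fin n) (Fin n) ℝ) (p : ℝ)
    (U : Set (EuclideanSpace ℝ (Fin n))) (G : EuclideanSpace ℝ (Fin n) → ℝ) : Prop :=
  ∀ ψ, IsTestFun U ψ →
    ∫ x in U, (aNorm A x (gradient G x)) ^ (p - 2) *
      aInner A x (gradient G x) (gradient ψ x) = 0

/-- Weak solution of `Q_{p,A,V}(u) = g` in `U` (for positive `u`). -/
def IsWeakSolution (A : EuclideanSpace ℝ (Fin n) → Matrix (Fin n) (Fin n) ℝ) (p : ℝ)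
    (V g : EuclideanSpace ℝ (Fin n) → ℝ) (U : Set (EuclideanSpace ℝ (Fin n)))
    (u : EuclideanSpace ℝ (Fin n) → ℝ) : Prop :=
  ∀ ψ, IsTestFun U ψ →
    (∫ x in U, (aNorm A x (gradient u x)) ^ (p - 2) *
        aInner A x (gradient u x) (gradient ψ x))
      + (∫ x in U, V x * u x ^ (p - 1) * ψ x)
      = ∫ x in U, g x * ψ x

/-- Weak supersolution of `Q_{p,A,V}(u) = 0` in `U` (for positive `u`). -/
def IsWeakSupersolution (A : EuclideanSpace ℝ (Fin n) → Matrix (Fin n) (Fin n) ℝ) (p : ℝ)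
    (V : EuclideanSpace ℝ (Fin n) → ℝ) (U : Set (EuclideanSpace ℝ (Fin n)))
    (u : EuclideanSpace ℝ (Fin n) → ℝ) : Prop :=
  ∀ ψ, IsTestFun U ψ → (∀ x, 0 ≤ ψ x) →
    0 ≤ (∫ x in U, (aNorm A x (gradient u x)) ^ (p - 2) *
        aInner A x (gradient u x) (gradient ψ x))
      + (∫ x in U, V x * u x ^ (p - 1) * ψ x)

/-- `Q_{p,A,V}` is subcritical in `Ω`. -/
def IsSubcritical (A : EuclideanSpace ℝ (Fin n) → Matrix (Fin n) (Fin n) ℝ) (p : ℝ)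
    (V : EuclideanSpace ℝ (Fin n) → ℝ) (Ω : Set (EuclideanSpace ℝ (Fin n))) : Prop :=
  ∃ W₀ : EuclideanSpace ℝ (Fin n) → ℝ, ContinuousOn W₀ Ω ∧ (∀ x ∈ Ω, 0 ≤ W₀ x) ∧
    (∃ x ∈ Ω, W₀ x ≠ 0) ∧
    ∀ ψ, IsTestFun Ω ψ →
      0 ≤ ∫ x in Ω, ((aNorm A x (gradient ψ x)) ^ p + (V x - W₀ x) * |ψ x| ^ p)

/-- A null-sequence for `Q_{p,A,V}` in `U`. -/
def IsNullSequence (A : EuclideanSpace ℝ (Fin n) → Matrix (Fin n) (Fin n) ℝ) (p : ℝ)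
    (V : EuclideanSpace ℝ (Fin n) → ℝ) (U : Set (EuclideanSpace ℝ (Fin n)))
    (u : ℕ → EuclideanSpace ℝ (Fin n) → ℝ) : Prop :=
  (∀ k, IsTestFun U (u k)) ∧ (∀ k x, 0 ≤ u k x) ∧
  (∃ B : Set (EuclideanSpace ℝ (Fin n)), IsOpen B ∧ B.Nonempty ∧
      IsCompact (closure B) ∧ closure B ⊆ U ∧
      ∃ c > (0:ℝ), ∀ k, c ≤ (∫ x in B, u k x ^ p) ∧ (∫ x in B, u k x ^ p) ≤ c⁻¹) ∧
  Tendsto (fun k => ∫ x in U,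
      ((aNorm A x (gradient (u k) x)) ^ p + V x * |u k x| ^ p)) atTop (𝓝 0)

/-- `V` lies in the local Morrey space `M^q_loc(p;Ω)`. -/
def InMorreyLoc (p : ℝ) (Ω : Set (EuclideanSpace ℝ (Fin n)))
    (V : EuclideanSpace ℝ (Fin n) → ℝ) : Prop :=
  if p < n then
    ∃ q : ℝ, q > (n : ℝ) / p ∧ ∀ ω : Set (EuclideanSpace ℝ (Fin n)),
      IsOpen ω → IsCompact (closure ω) → closure ω ⊆ Ω →
      ∃ M : ℝ, ∀ y ∈ ω, ∀ r ∈ Set.Ioo (0:ℝ) (Metric.diam ω),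
        r ^ ((n : ℝ) / q - n) * (∫ x in ω ∩ Metric.ball y r, |V x|) ≤ M
  else if (n : ℝ) < p then
    MeasureTheory.LocallyIntegrableOn V Ω
  else
    ∃ q : ℝ, q > (n : ℝ) ∧ ∀ ω : Set (EuclideanSpace ℝ (Fin n)),
      IsOpen ω → IsCompact (closure ω) → closure ω ⊆ Ω →
      ∃ M : ℝ, ∀ y ∈ ω, ∀ r ∈ Set.Ioo (0:ℝ) (Metric.diam ω),
        (Real.log (Metric.diam ω / r)) ^ (q * ((n : ℝ) - 1) / n) *
          (∫ x in ω ∩ Metric.ball y r, |V x|) ≤ M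

/-- `G ∈ C^{1,α}(U)`: continuously differentiable with locally `α`-Hölder gradient. -/
def IsC1Holder (α : ℝ) (U : Set (EuclideanSpace ℝ (Fin n)))
    (G : EuclideanSpace ℝ (Fin n) → ℝ) : Prop :=
  ContDiffOn ℝ 1 G U ∧ ∀ K ⊆ U, IsCompact K → ∃ C : ℝ,
    ∀ x ∈ K, ∀ y ∈ K, ‖gradient G x - gradient G y‖ ≤ C * dist x y ^ α

/-- `G → 0` at infinity in `Ω` (where `G` is considered on `U ⊆ Ω`). -/
def TendstoZeroAtInfinityIn (Ω U : Set (EuclideanSpace ℝ (Fin n)))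
    (G : EuclideanSpace ℝ (Fin n) → ℝ) : Prop :=
  ∀ ε > (0:ℝ), ∃ K ⊆ Ω, IsCompact K ∧ ∀ x ∈ U \ K, G x < ε

open scoped Classical in
/-- Flux integral `∫_S |∇G|_A^p / |∇G| dH^{n-1}`, with integrand `0` where `∇G = 0`. -/
def fluxIntegral (A : EuclideanSpace ℝ (Fin n) → Matrix (Fin n) (Fin n) ℝ) (p : ℝ)
    (G : EuclideanSpace ℝ (Fin n) → ℝ) (S : Set (EuclideanSpace ℝ (Fin n))) : ℝ :=
  ∫ x in S, (if gradient G x = 0 then 0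
    else (aNorm A x (gradient G x)) ^ p / ‖gradient G x‖) ∂(μH[(n : ℝ) - 1])

end


section Aux
open scoped Convolution

variable {n : ℕ}

local notation "E" => EuclideanSpace ℝ (Fin n)

/-! ### The quadratic form of `A` -/

lemma aInner_smul_right (A : E → Matrix (Fin n) (Fin n) ℝ) (x ξ η : E) (c : ℝ) :
    aInner A x ξ (c • η) = c * aInner A x ξ η := by
  simp only [aInner, Finset.mul_sum, PiLp.smul_apply, smul_eq_mul]
  exact Finset.sum_congr rfl fun i _ => Finset.sum_congr rfl fun j _ => by ring

lemma aNorm_smul (A : E → Matrix (Fin n) (Fin n) ℝ) (x ξ : E) (c : ℝ) :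
    aNorm A x (c • ξ) = |c| * aNorm A x ξ := by
  have : aInner A x (c • ξ) (c • ξ) = c ^ 2 * aInner A x ξ ξ := by
    simp only [aInner, Finset.mul_sum, PiLp.smul_apply, smul_eq_mul]
    exact Finset.sum_congr rfl fun i _ => Finset.sum_congr rfl fun j _ => by ring
  rw [aNorm, aNorm, this, Real.sqrt_mul (sq_nonneg c), Real.sqrt_sq_eq_abs]

lemma aNorm_zero (A : E → Matrix (Fin n) (Fin n) ℝ) (x : E) : aNorm A x 0 = 0 := by
  simp [aNorm, aInner]

lemma aInner_zero_right (A : E → Matrix (Fin n) (Fin n) ℝ) (x ξ : E) : aInner A x ξ 0 = 0 := by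
  simp [aInner]

lemma IsEllipticMatrix.continuousOn {Ω : Set E} {A : E → Matrix (Fin n) (Fin n) ℝ}
    (hA : IsEllipticMatrix Ω A) (hΩ : IsOpen Ω) (i j : Fin n) :
    ContinuousOn (fun x => A x i j) Ω := by
  intro x hx
  obtain ⟨r, hr, hrs⟩ := Metric.nhds_basis_closedBall.mem_iff.1 (hΩ.mem_nhds hx)
  obtain ⟨C, hC, β, hβ, h⟩ := hA.locHolder _ hrs (isCompact_closedBall x r)
  apply ContinuousAt.continuousWithinAt
  have hlim : Tendsto (fun y => C * dist y x ^ β) (𝓝 x) (𝓝 0) := by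
    have h1 : Continuous fun y : E => C * dist y x ^ β := by
      have := hβ.1.le
      fun_prop (disch := assumption)
    have h2 := h1.tendsto x
    simpa [Real.zero_rpow hβ.1.ne'] using h2
  rw [ContinuousAt, tendsto_iff_dist_tendsto_zero]
  refine squeeze_zero' (Eventually.of_forall fun _ => dist_nonneg) ?_ hlim
  filter_upwards [Metric.closedBall_mem_nhds x hr] with y hy
  rw [Real.dist_eq]
  exact h y hy x (Metric.mem_closedBall_self hr.le) i j

lemma continuousOn_aInner {S : Set E} {A : E → Matrix (Fin n) (Fin n) ℝ}
    (hA : ∀ i j, ContinuousOn (fun x => A x i j) S) {ξ η : E → E}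
    (hξ : ContinuousOn ξ S) (hη : ContinuousOn η S) :
    ContinuousOn (fun x => aInner A x (ξ x) (η x)) S := by
  unfold aInner
  refine continuousOn_finsetSum _ fun i _ => continuousOn_finsetSum _ fun j _ => ?_
  have h1 : ContinuousOn (fun x => ξ x j) S := by fun_prop
  have h2 : ContinuousOn (fun x => η x i) S := by fun_prop
  exact ((hA i j).mul h1).mul h2

lemma continuousOn_aNorm {S : Set E} {A : E → Matrix (Fin n) (Fin n) ℝ}
    (hA : ∀ i j, ContinuousOn (fun x => A x i j) S) {ξ : E → E}
    (hξ : ContinuousOn ξ S) :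
    ContinuousOn (fun x => aNorm A x (ξ x)) S :=
  (continuousOn_aInner hA hξ hξ).sqrt

lemma exists_aInner_le {K : Set E} (hK : IsCompact K) {A : E → Matrix (Fin n) (Fin n) ℝ}
    (hA : ∀ i j, ContinuousOn (fun x => A x i j) K) :
    ∃ C, 0 ≤ C ∧ ∀ x ∈ K, ∀ ξ η : E, |aInner A x ξ η| ≤ C * (‖ξ‖ * ‖η‖) := by
  have hc : ContinuousOn (fun x => ∑ i, ∑ j, |A x i j|) K :=
    continuousOn_finsetSum _ fun i _ => continuousOn_finsetSum _ fun j _ => (hA i j).abs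
  obtain ⟨C, hC⟩ := hK.exists_bound_of_continuousOn hc
  refine ⟨max C 0, le_max_right _ _, fun x hx ξ η => ?_⟩
  have h1 : |aInner A x ξ η| ≤ (∑ i, ∑ j, |A x i j|) * (‖ξ‖ * ‖η‖) := by
    rw [Finset.sum_mul]
    refine (Finset.abs_sum_le_sum_abs _ _).trans (Finset.sum_le_sum fun i _ => ?_)
    rw [Finset.sum_mul]
    refine (Finset.abs_sum_le_sum_abs _ _).trans (Finset.sum_le_sum fun j _ => ?_)
    rw [abs_mul, abs_mul, mul_assoc]
    have e1 : |ξ j| ≤ ‖ξ‖ := PiLp.norm_apply_le ξ j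
    have e2 : |η i| ≤ ‖η‖ := PiLp.norm_apply_le η i
    gcongr
  refine h1.trans ?_
  gcongr
  exact (le_abs_self _).trans ((hC x hx).trans (le_max_left _ _))

/-! ### Mollification and limits of integrals -/

/-- Smooth approximation in `C¹` of a compactly supported `C¹` function, with all supports in
one compact subset of `Ω` and with uniform bounds, in the form dominated convergence needs. -/
lemma exists_mollification {Ω : Set E} (hΩ : IsOpen Ω) {U : E → ℝ} (hU : ContDiff ℝ 1 U)
    (hUc : HasCompactSupport U) (hUΩ : tsupport U ⊆ Ω) :
    ∃ (K : Set E) (M : ℝ) (u : ℕ → E → ℝ), IsCompact K ∧ K ⊆ Ω ∧ (∀ j, IsTestFun Ω (u j)) ∧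
      (∀ j, ∀ x ∉ K, u j x = 0 ∧ gradient (u j) x = 0) ∧
      (∀ j x, |u j x| ≤ M ∧ ‖gradient (u j) x‖ ≤ M) ∧
      (∀ x, Tendsto (fun j => gradient (u j) x) atTop (𝓝 (gradient U x))) ∧
      TendstoUniformly u U atTop ∧
      ((∀ x, 0 ≤ U x) → ∀ j x, 0 ≤ u j x) := by
  obtain ⟨δ, hδ, hδΩ⟩ := hUc.isCompact.exists_cthickening_subset_open hΩ hUΩ
  have hfc : Continuous (fderiv ℝ U) := hU.continuous_fderiv one_ne_zero
  have hfs : HasCompactSupport (fderiv ℝ U) := hUc.fderiv ℝ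
  have huc1 := hUc.uniformContinuous_of_continuous hU.continuous
  have huc2 := hfs.uniformContinuous_of_continuous hfc
  rw [Metric.uniformContinuous_iff] at huc1 huc2
  have key : ∀ j : ℕ, ∃ u : E → ℝ, IsTestFun Ω u ∧
      tsupport u ⊆ Metric.cthickening δ (tsupport U) ∧
      (∀ x, |u x - U x| ≤ 1 / ((j : ℝ) + 1)) ∧
      (∀ x, ‖gradient u x - gradient U x‖ ≤ 1 / ((j : ℝ) + 1)) ∧
      ((∀ x, 0 ≤ U x) → ∀ x, 0 ≤ u x) := by
    intro j
    have hε : (0 : ℝ) < 1 / ((j : ℝ) + 1) := by positivity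
    obtain ⟨r1, hr1, h1⟩ := huc1 _ hε
    obtain ⟨r2, hr2, h2⟩ := huc2 _ hε
    have hr : 0 < min δ (min r1 r2) := by positivity
    set r := min δ (min r1 r2) with hrdef
    let f : ContDiffBump (0 : E) := ⟨r / 2, r, by positivity, by linarith⟩
    let u : E → ℝ := (f.normed volume ⋆[ContinuousLinearMap.lsmul ℝ ℝ, volume] U)
    have hsupp : tsupport u ⊆ Metric.cthickening δ (tsupport U) := by
      have hs : Function.support u ⊆ Metric.cthickening δ (tsupport U) := by
        refine (support_convolution_subset _).trans ?_
        rw [f.support_normed_eq]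
        rintro _ ⟨a, ha, b, hb, rfl⟩
        refine Metric.mem_cthickening_of_dist_le _ b _ _ (subset_tsupport _ hb) ?_
        have : ‖a‖ < r := by simpa [f] using ha
        simp only [dist_eq_norm, add_sub_cancel_right]
        exact this.le.trans (min_le_left _ _)
      exact closure_minimal hs Metric.isClosed_cthickening
    have hfd : ∀ x, HasFDerivAt u
        ((f.normed volume ⋆[ContinuousLinearMap.lsmul ℝ ℝ, volume] fderiv ℝ U) x) x := by
      intro x
      have := HasCompactSupport.hasFDerivAt_convolution_right (ContinuousLinearMap.lsmul ℝ ℝ)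
        (f := f.normed volume) (μ := volume) hUc (f.continuous_normed.locallyIntegrable) hU x
      exact this
    refine ⟨u, ⟨?_, ?_, hsupp.trans hδΩ⟩, hsupp, ?_, ?_, ?_⟩
    · exact f.hasCompactSupport_normed.contDiff_convolution_left _ f.contDiff_normed
        hU.continuous.locallyIntegrable
    · exact HasCompactSupport.of_support_subset_isCompact hUc.isCompact.cthickening
        ((subset_tsupport _).trans hsupp)
    · intro x
      rw [← Real.dist_eq]
      refine f.dist_normed_convolution_le hU.continuous.aestronglyMeasurable fun y hy => ?_
      refine (h1 (lt_of_lt_of_le hy ?_)).le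
      exact (min_le_right _ _).trans (min_le_left _ _)
    · intro x
      have : gradient u x - gradient U x
          = (InnerProductSpace.toDual ℝ E).symm (fderiv ℝ u x - fderiv ℝ U x) := by
        simp [gradient]
      rw [this, LinearIsometryEquiv.norm_map, (hfd x).fderiv, ← dist_eq_norm]
      refine f.dist_normed_convolution_le hfc.aestronglyMeasurable fun y hy => ?_
      refine (h2 (lt_of_lt_of_le hy ?_)).le
      exact (min_le_right _ _).trans (min_le_right _ _)
    · intro hpos x
      refine integral_nonneg fun t => ?_
      exact mul_nonneg (f.nonneg_normed t) (hpos _)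
  choose u hu hus hu1 hu2 hu3 using key
  obtain ⟨M1, hM1⟩ := hUc.exists_bound_of_continuous hU.continuous
  obtain ⟨M2, hM2⟩ := hfs.exists_bound_of_continuous hfc
  have hle1 : ∀ j : ℕ, 1 / ((j : ℝ) + 1) ≤ 1 := fun j => by
    rw [div_le_one (by positivity)]; linarith [(Nat.cast_nonneg j : (0 : ℝ) ≤ j)]
  refine ⟨_, max M1 M2 + 1, u, hUc.isCompact.cthickening (r := δ), hδΩ, hu, ?_, ?_, ?_, ?_, ?_⟩
  · intro j x hx
    have hx' : x ∉ tsupport (u j) := fun h => hx (hus j h)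
    refine ⟨image_eq_zero_of_notMem_tsupport hx', ?_⟩
    have : fderiv ℝ (u j) x = 0 := by
      by_contra h
      exact hx' (support_fderiv_subset ℝ h)
    simp [gradient, this]
  · intro j x
    have a1 := hu1 j x
    have a2 := hu2 j x
    have b1 := hM1 x
    have b2 : ‖gradient U x‖ ≤ M2 := by
      simpa [gradient] using hM2 x
    rw [Real.norm_eq_abs] at b1
    have c1 : |u j x| ≤ |u j x - U x| + |U x| := by
      simpa using abs_add_le (u j x - U x) (U x)
    have c2 : ‖gradient (u j) x‖ ≤ ‖gradient (u j) x - gradient U x‖ + ‖gradient U x‖ := by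
      simpa using norm_add_le (gradient (u j) x - gradient U x) (gradient U x)
    have := hle1 j
    exact ⟨by linarith [le_max_left M1 M2], by linarith [le_max_right M1 M2]⟩
  · intro x
    rw [tendsto_iff_norm_sub_tendsto_zero]
    exact squeeze_zero (fun _ => norm_nonneg _) (fun j => hu2 j x)
      tendsto_one_div_add_atTop_nhds_zero_nat
  · rw [Metric.tendstoUniformly_iff]
    intro ε hε
    filter_upwards [tendsto_one_div_add_atTop_nhds_zero_nat.eventually (gt_mem_nhds hε)]
      with j hj x
    rw [dist_comm, Real.dist_eq]
    exact (hu1 j x).trans_lt hj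
  · exact fun h j => hu3 j h

lemma tendsto_integral_of_compact {Ω K : Set E} (hΩ : MeasurableSet Ω) (hK : IsCompact K)
    {F : ℕ → E → ℝ} {f b : E → ℝ} (hb : IntegrableOn b K)
    (hm : ∀ j, AEStronglyMeasurable (F j) (volume.restrict Ω))
    (hF : ∀ j, ∀ x ∈ Ω, x ∉ K → F j x = 0) (hle : ∀ j, ∀ x ∈ K, |F j x| ≤ b x)
    (hlim : ∀ x ∈ Ω, Tendsto (fun j => F j x) atTop (𝓝 (f x))) :
    Tendsto (fun j => ∫ x in Ω, F j x) atTop (𝓝 (∫ x in Ω, f x)) := by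
  refine tendsto_integral_of_dominated_convergence (K.indicator b) hm ?_ ?_ ?_
  · exact ((integrable_indicator_iff hK.measurableSet).2 hb).integrableOn
  · intro j
    filter_upwards [ae_restrict_mem hΩ] with x hx
    by_cases hxK : x ∈ K
    · simpa [hxK] using hle j x hxK
    · simp [hxK, hF j x hx hxK]
  · filter_upwards [ae_restrict_mem hΩ] with x hx using hlim x hx

lemma continuousOn_gradient {Ω : Set E} (hΩ : IsOpen Ω) {G : E → ℝ} (hG : ContDiffOn ℝ 1 G Ω) :
    ContinuousOn (gradient G) Ω :=
  (InnerProductSpace.toDual ℝ E).symm.continuous.comp_continuousOn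
    (hG.continuousOn_fderiv_of_isOpen hΩ le_rfl)

lemma continuous_gradient {u : E → ℝ} (hu : ContDiff ℝ 1 u) : Continuous (gradient u) :=
  (InnerProductSpace.toDual ℝ E).symm.continuous.comp (hu.continuous_fderiv one_ne_zero)

/-- The weak formulation, postulated for `C_c^∞` test functions, holds for `C_c^1` ones. -/
lemma weak_extend {Ω : Set E} (hΩ : IsOpen Ω) {p : ℝ} (hp : 1 < p)
    {A : E → Matrix (Fin n) (Fin n) ℝ} (hA : IsEllipticMatrix Ω A)
    {V φ G : E → ℝ} (hG : ContDiffOn ℝ 1 G Ω) (hφ : Continuous φ)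
    (hVG : IntegrableOn (fun x => V x * G x ^ (p - 1)) Ω)
    (hsol : IsWeakSolution A p V φ Ω G)
    {U : E → ℝ} (hU : ContDiff ℝ 1 U) (hUc : HasCompactSupport U) (hUΩ : tsupport U ⊆ Ω) :
    (∫ x in Ω, (aNorm A x (gradient G x)) ^ (p - 2) *
        aInner A x (gradient G x) (gradient U x))
      + (∫ x in Ω, V x * G x ^ (p - 1) * U x) = ∫ x in Ω, φ x * U x := by
  obtain ⟨K, M, u, hK, hKΩ, hu, hu0, huM, hug, huU, -⟩ := exists_mollification hΩ hU hUc hUΩ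
  have hgc := continuousOn_gradient hΩ hG
  have hAc := hA.continuousOn hΩ
  have hNc : ContinuousOn (fun x => aNorm A x (gradient G x)) Ω := continuousOn_aNorm hAc hgc
  have huc : ∀ j, Continuous (u j) := fun j => (hu j).1.continuous
  have hux : ∀ x, Tendsto (fun j => u j x) atTop (𝓝 (U x)) := fun x => huU.tendsto_at x
  have hM : 0 ≤ M := (abs_nonneg _).trans (huM 0 0).1
  have L1 : Tendsto (fun j => ∫ x in Ω, (aNorm A x (gradient G x)) ^ (p - 2) *
        aInner A x (gradient G x) (gradient (u j) x)) atTop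
      (𝓝 (∫ x in Ω, (aNorm A x (gradient G x)) ^ (p - 2) *
        aInner A x (gradient G x) (gradient U x))) := by
    obtain ⟨C, hC0, hC⟩ := exists_aInner_le hK (fun i j => (hAc i j).mono hKΩ)
    obtain ⟨Θ, hΘ, hell⟩ := hA.elliptic K hKΩ hK
    refine tendsto_integral_of_compact hΩ.measurableSet hK
      (b := fun x => C * Real.sqrt Θ * M * (aNorm A x (gradient G x)) ^ (p - 1)) ?_ ?_ ?_ ?_ ?_
    · refine ContinuousOn.integrableOn_compact hK ?_
      exact continuousOn_const.mul ((hNc.mono hKΩ).rpow_const fun x _ => Or.inr (by linarith))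
    · intro j
      have h1 : AEStronglyMeasurable (fun x => (aNorm A x (gradient G x)) ^ (p - 2))
          (volume.restrict Ω) :=
        ((hNc.aestronglyMeasurable hΩ.measurableSet).aemeasurable.pow_const _).aestronglyMeasurable
      have h2 : ContinuousOn (fun x => aInner A x (gradient G x) (gradient (u j) x)) Ω :=
        continuousOn_aInner hAc hgc
          (continuous_gradient ((hu j).1.of_le (by norm_cast))).continuousOn
      exact h1.mul (h2.aestronglyMeasurable hΩ.measurableSet)
    · intro j x _ hxK
      rw [(hu0 j x hxK).2, aInner_zero_right, mul_zero]
    · intro j x hxK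
      have hN : 0 ≤ aNorm A x (gradient G x) := Real.sqrt_nonneg _
      -- ellipticity absorbs the possibly singular factor `|∇G|_A^{p-2}`
      have e1 : ‖gradient G x‖ ≤ Real.sqrt Θ * aNorm A x (gradient G x) := by
        rw [aNorm, ← Real.sqrt_mul hΘ.le]
        refine Real.le_sqrt_of_sq_le ?_
        have := (hell x hxK (gradient G x)).1
        rwa [inv_mul_le_iff₀ hΘ] at this
      have e2 := hC x hxK (gradient G x) (gradient (u j) x)
      have e3 : |aInner A x (gradient G x) (gradient (u j) x)| ≤
          C * Real.sqrt Θ * M * aNorm A x (gradient G x) := by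
        refine e2.trans ?_
        calc C * (‖gradient G x‖ * ‖gradient (u j) x‖)
            ≤ C * ((Real.sqrt Θ * aNorm A x (gradient G x)) * M) := by
              gcongr
              exact (huM j x).2
          _ = _ := by ring
      rw [abs_mul, abs_of_nonneg (Real.rpow_nonneg hN _)]
      rcases hN.eq_or_lt with h0 | h0
      · rw [← h0] at e3 ⊢
        rw [mul_zero] at e3
        rw [le_antisymm e3 (abs_nonneg _), mul_zero]
        have := Real.sqrt_nonneg Θ
        positivity
      · calc _ ≤ aNorm A x (gradient G x) ^ (p - 2) *
              (C * Real.sqrt Θ * M * aNorm A x (gradient G x)) := by gcongr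
          _ = C * Real.sqrt Θ * M *
              (aNorm A x (gradient G x) ^ (p - 2) * aNorm A x (gradient G x) ^ (1 : ℝ)) := by
            rw [Real.rpow_one]; ring
          _ = _ := by rw [← Real.rpow_add h0]; congr 2; ring
    · intro x _
      refine Tendsto.const_mul _ ?_
      have : Continuous fun η : E => aInner A x (gradient G x) η := by
        unfold aInner; fun_prop
      exact (this.tendsto _).comp (hug x)
  have L2 : Tendsto (fun j => ∫ x in Ω, V x * G x ^ (p - 1) * u j x) atTop
      (𝓝 (∫ x in Ω, V x * G x ^ (p - 1) * U x)) := by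
    refine tendsto_integral_of_compact hΩ.measurableSet hK
      (b := fun x => |V x * G x ^ (p - 1)| * M) ?_ ?_ ?_ ?_ ?_
    · exact ((hVG.mono_set hKΩ).abs).mul_const _
    · exact fun j => hVG.aestronglyMeasurable.mul (huc j).aestronglyMeasurable
    · intro j x _ hxK
      rw [(hu0 j x hxK).1, mul_zero]
    · intro j x _
      rw [abs_mul]
      gcongr
      exact (huM j x).1
    · exact fun x _ => (hux x).const_mul _
  have L3 : Tendsto (fun j => ∫ x in Ω, φ x * u j x) atTop (𝓝 (∫ x in Ω, φ x * U x)) := by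
    refine tendsto_integral_of_compact hΩ.measurableSet hK (b := fun x => |φ x| * M) ?_ ?_ ?_ ?_ ?_
    · exact (hφ.abs.mul continuous_const).continuousOn.integrableOn_compact hK
    · exact fun j => (hφ.mul (huc j)).aestronglyMeasurable
    · intro j x _ hxK
      rw [(hu0 j x hxK).1, mul_zero]
    · intro j x _
      rw [abs_mul]
      gcongr
      exact (huM j x).1
    · exact fun x _ => (hux x).const_mul _
  refine tendsto_nhds_unique (L1.add L2) ?_
  simpa only [hsol _ (hu _)] using L3

/-- Approximation of a nonnegative `C_c^1` function by nonnegative `C_c^∞` functions, uniformly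
and in energy. -/
lemma exists_testFun_energy {Ω : Set E} (hΩ : IsOpen Ω) {p : ℝ} (hp : 1 < p)
    {A : E → Matrix (Fin n) (Fin n) ℝ} (hA : IsEllipticMatrix Ω A) {P : E → ℝ}
    (hP : AEStronglyMeasurable P (volume.restrict Ω))
    (hPi : ∀ K ⊆ Ω, IsCompact K → IntegrableOn P K)
    {U : E → ℝ} (hU : ContDiff ℝ 1 U) (hUc : HasCompactSupport U) (hUΩ : tsupport U ⊆ Ω)
    (hU0 : ∀ x, 0 ≤ U x) {ε : ℝ} (hε : 0 < ε) {d : ℝ} (hd : 0 < d) :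
    ∃ u : E → ℝ, IsTestFun Ω u ∧ (∀ x, 0 ≤ u x) ∧ (∀ x, |u x - U x| < d) ∧
      |(∫ x in Ω, ((aNorm A x (gradient u x)) ^ p + P x * |u x| ^ p)) -
        ∫ x in Ω, ((aNorm A x (gradient U x)) ^ p + P x * |U x| ^ p)| < ε := by
  obtain ⟨K, M, u, hK, hKΩ, hu, hu0, huM, hug, huU, hupos⟩ := exists_mollification hΩ hU hUc hUΩ
  have hAc := hA.continuousOn hΩ
  have huc : ∀ j, Continuous (u j) := fun j => (hu j).1.continuous
  have hux : ∀ x, Tendsto (fun j => u j x) atTop (𝓝 (U x)) := fun x => huU.tendsto_at x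
  have hM : 0 ≤ M := (abs_nonneg _).trans (huM 0 0).1
  have hp0 : 0 < p := by linarith
  have L : Tendsto (fun j => ∫ x in Ω, ((aNorm A x (gradient (u j) x)) ^ p + P x * |u j x| ^ p))
      atTop (𝓝 (∫ x in Ω, ((aNorm A x (gradient U x)) ^ p + P x * |U x| ^ p))) := by
    obtain ⟨C, hC0, hC⟩ := exists_aInner_le hK (fun i j => (hAc i j).mono hKΩ)
    refine tendsto_integral_of_compact hΩ.measurableSet hK
      (b := fun x => Real.sqrt (C * (M * M)) ^ p + |P x| * M ^ p) ?_ ?_ ?_ ?_ ?_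
    · exact (continuousOn_const.integrableOn_compact hK).add ((hPi K hKΩ hK).abs.mul_const _)
    · intro j
      have h1 : ContinuousOn (fun x => (aNorm A x (gradient (u j) x)) ^ p) Ω :=
        (continuousOn_aNorm hAc (continuous_gradient
          ((hu j).1.of_le (by norm_cast))).continuousOn).rpow_const
          fun x _ => Or.inr hp0.le
      exact (h1.aestronglyMeasurable hΩ.measurableSet).add
        (hP.mul ((huc j).abs.rpow_const fun _ => Or.inr hp0.le).aestronglyMeasurable)
    · intro j x _ hxK
      rw [(hu0 j x hxK).1, (hu0 j x hxK).2, aNorm_zero, abs_zero, Real.zero_rpow hp0.ne']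
      simp
    · intro j x hxK
      refine (abs_add_le _ _).trans ?_
      have hN : 0 ≤ aNorm A x (gradient (u j) x) := Real.sqrt_nonneg _
      rw [abs_mul, abs_of_nonneg (Real.rpow_nonneg hN _),
        abs_of_nonneg (Real.rpow_nonneg (abs_nonneg (u j x)) _)]
      have e1 : aNorm A x (gradient (u j) x) ≤ Real.sqrt (C * (M * M)) := by
        refine Real.sqrt_le_sqrt ((le_abs_self _).trans ((hC x hxK _ _).trans ?_))
        have := (huM j x).2
        gcongr
      have e2 := (huM j x).1
      exact add_le_add (Real.rpow_le_rpow hN e1 hp0.le) (by gcongr)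
    · intro x _
      have c1 : Continuous fun η : E => aNorm A x η ^ p := by
        refine Continuous.rpow_const ?_ fun _ => Or.inr hp0.le
        unfold aNorm aInner; fun_prop
      have c2 : Continuous fun t : ℝ => P x * |t| ^ p :=
        continuous_const.mul (continuous_abs.rpow_const fun _ => Or.inr hp0.le)
      exact ((c1.tendsto _).comp (hug x)).add ((c2.tendsto _).comp (hux x))
  have e1 := Metric.tendsto_nhds.1 L ε hε
  have e2 := Metric.tendstoUniformly_iff.1 huU d hd
  obtain ⟨j, h1, h2⟩ := (e1.and e2).exists
  refine ⟨u j, hu j, hupos hU0 j, fun x => ?_, ?_⟩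
  · have := h2 x
    rwa [dist_comm, Real.dist_eq] at this
  · rwa [Real.dist_eq] at h1

/-! ### Testing with functions of `G` -/

/-- Truncated functions of `G` are admissible: since `G → 0` at infinity, `F ∘ G` has compact
support in `Ω` as soon as `F` vanishes near `0`. -/
lemma comp_G {Ω : Set E} (hΩ : IsOpen Ω) {G : E → ℝ} (hG : ContDiffOn ℝ 1 G Ω)
    (hGpos : ∀ x ∈ Ω, 0 < G x) (hGinf : TendstoZeroAtInfinityIn Ω Ω G)
    {F : ℝ → ℝ} (hF : ContDiffOn ℝ 1 F (Ioi 0)) {a : ℝ} (ha : 0 < a)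
    (hFa : ∀ t ∈ Ioo 0 a, F t = 0) :
    ContDiff ℝ 1 (Ω.indicator fun x => F (G x)) ∧
      HasCompactSupport (Ω.indicator fun x => F (G x)) ∧
      tsupport (Ω.indicator fun x => F (G x)) ⊆ Ω ∧
      ∀ x ∈ Ω, gradient (Ω.indicator fun x => F (G x)) x = deriv F (G x) • gradient G x := by
  obtain ⟨K, hKΩ, hK, hKa⟩ := hGinf a ha
  have hz : ∀ x ∉ K, Ω.indicator (fun x => F (G x)) x = 0 := by
    intro x hx
    by_cases hxΩ : x ∈ Ω
    · rw [indicator_of_mem hxΩ]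
      exact hFa _ ⟨hGpos x hxΩ, hKa x ⟨hxΩ, hx⟩⟩
    · exact indicator_of_notMem hxΩ _
  have hev : ∀ x ∈ Ω, Ω.indicator (fun x => F (G x)) =ᶠ[𝓝 x] fun x => F (G x) := by
    intro x hx
    filter_upwards [hΩ.mem_nhds hx] with y hy using indicator_of_mem hy _
  have hsupp : tsupport (Ω.indicator fun x => F (G x)) ⊆ K := by
    refine closure_minimal (fun x hx => ?_) hK.isClosed
    by_contra h
    exact hx (hz x h)
  refine ⟨?_, HasCompactSupport.of_support_subset_isCompact hK
    ((subset_tsupport _).trans hsupp), hsupp.trans hKΩ, ?_⟩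
  · rw [contDiff_iff_contDiffAt]
    intro x
    by_cases hx : x ∈ Ω
    · refine ContDiffAt.congr_of_eventuallyEq ?_ (hev x hx)
      exact (hF.contDiffAt (Ioi_mem_nhds (hGpos x hx))).comp x (hG.contDiffAt (hΩ.mem_nhds hx))
    · have : Ω.indicator (fun x => F (G x)) =ᶠ[𝓝 x] fun _ => 0 := by
        filter_upwards [hK.isClosed.isOpen_compl.mem_nhds fun h => hx (hKΩ h)] with y hy
          using hz y hy
      exact contDiffAt_const.congr_of_eventuallyEq this
  · intro x hx
    have h1 : HasDerivAt F (deriv F (G x)) (G x) :=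
      ((hF.contDiffAt (Ioi_mem_nhds (hGpos x hx))).differentiableAt one_ne_zero).hasDerivAt
    have h2 : HasFDerivAt G (fderiv ℝ G x) x :=
      ((hG.contDiffAt (hΩ.mem_nhds hx)).differentiableAt one_ne_zero).hasFDerivAt
    have h3 := (h1.comp_hasFDerivAt x h2).congr_of_eventuallyEq (hev x hx)
    rw [gradient, h3.fderiv, gradient]
    simp

/-- Testing the equation with `F(G)`, `F` vanishing near `0`, turns the principal part into
`∫ F'(G) |∇G|_A^p`. -/
lemma identity_G {Ω : Set E} (hΩ : IsOpen Ω) {p : ℝ} (hp : 1 < p)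
    {A : E → Matrix (Fin n) (Fin n) ℝ} (hA : IsEllipticMatrix Ω A)
    {V φ G : E → ℝ} (hG : ContDiffOn ℝ 1 G Ω) (hφ : Continuous φ)
    (hVG : IntegrableOn (fun x => V x * G x ^ (p - 1)) Ω)
    (hsol : IsWeakSolution A p V φ Ω G)
    (hGpos : ∀ x ∈ Ω, 0 < G x) (hGinf : TendstoZeroAtInfinityIn Ω Ω G)
    {F : ℝ → ℝ} (hF : ContDiffOn ℝ 1 F (Ioi 0)) {a : ℝ} (ha : 0 < a)
    (hFa : ∀ t ∈ Ioo 0 a, F t = 0) :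
    IntegrableOn (fun x => deriv F (G x) * aNorm A x (gradient G x) ^ p) Ω ∧
    (∫ x in Ω, deriv F (G x) * aNorm A x (gradient G x) ^ p)
      + (∫ x in Ω, V x * G x ^ (p - 1) * F (G x)) = ∫ x in Ω, φ x * F (G x) := by
  obtain ⟨h1, h2, h3, h4⟩ := comp_G hΩ hG hGpos hGinf hF ha hFa
  have hp0 : 0 < p := by linarith
  constructor
  · obtain ⟨K, hKΩ, hK, hKa⟩ := hGinf a ha
    have hNc : ContinuousOn (fun x => aNorm A x (gradient G x)) Ω :=
      continuousOn_aNorm (hA.continuousOn hΩ) (continuousOn_gradient hΩ hG)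
    have hc : ContinuousOn (fun x => deriv F (G x) * aNorm A x (gradient G x) ^ p) Ω := by
      refine ContinuousOn.mul ?_ (hNc.rpow_const fun _ _ => Or.inr hp0.le)
      exact (hF.continuousOn_deriv_of_isOpen isOpen_Ioi le_rfl).comp hG.continuousOn
        fun x hx => hGpos x hx
    refine ((hc.mono hKΩ).integrableOn_compact hK).of_forall_sdiff_eq_zero hΩ.measurableSet ?_
    intro x hx
    have : F =ᶠ[𝓝 (G x)] fun _ => 0 := by
      filter_upwards [Ioo_mem_nhds (hGpos x hx.1) (hKa x hx)] with t ht using hFa t ht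
    rw [this.deriv_eq]
    simp
  · have hw := weak_extend hΩ hp hA hG hφ hVG hsol h1 h2 h3
    have e1 : (∫ x in Ω, (aNorm A x (gradient G x)) ^ (p - 2) *
        aInner A x (gradient G x) (gradient (Ω.indicator fun x => F (G x)) x))
        = ∫ x in Ω, deriv F (G x) * aNorm A x (gradient G x) ^ p := by
      refine setIntegral_congr_fun hΩ.measurableSet fun x hx => ?_
      rw [h4 x hx, aInner_smul_right]
      have hin : aInner A x (gradient G x) (gradient G x) = aNorm A x (gradient G x) ^ 2 := by
        refine (Real.sq_sqrt ?_).symm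
        by_cases h0 : gradient G x = 0
        · rw [h0, aInner_zero_right]
        · exact (hA.posdef x hx _ h0).le
      rw [hin]
      have hN : 0 ≤ aNorm A x (gradient G x) := Real.sqrt_nonneg _
      rcases hN.eq_or_lt with h0 | h0
      · rw [← h0, Real.zero_rpow hp0.ne']; simp
      · rw [← Real.rpow_two, mul_left_comm, ← Real.rpow_add h0]
        congr 2; ring
    rw [e1] at hw
    refine (congrArg₂ (· + ·) rfl ?_).trans (hw.trans ?_)
    · refine setIntegral_congr_fun hΩ.measurableSet fun x hx => ?_
      simp [indicator_of_mem hx]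
    · refine setIntegral_congr_fun hΩ.measurableSet fun x hx => ?_
      simp [indicator_of_mem hx]

/-! ### One-variable estimates -/

/-- The first-order Taylor remainder of `t ↦ t ^ p` is `o(b)` uniformly for base points in
`[0, 1]`. -/
lemma rpow_remainder {p : ℝ} (hp : 1 < p) {ω : ℝ} (hω : 0 < ω) :
    ∃ δ > 0, ∀ x ∈ Icc (0 : ℝ) 1, ∀ b, 0 ≤ b → b ≤ δ →
      |(x + b) ^ p - x ^ p - p * x ^ (p - 1) * b| ≤ ω * b := by
  have hc : ContinuousOn (fun t : ℝ => p * t ^ (p - 1)) (Icc 0 2) :=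
    (continuous_const.mul (continuous_id.rpow_const fun _ => Or.inr (by linarith))).continuousOn
  have huc := isCompact_Icc.uniformContinuousOn_of_continuous hc
  rw [Metric.uniformContinuousOn_iff] at huc
  obtain ⟨δ, hδ, h⟩ := huc ω hω
  refine ⟨min (δ / 2) 1, by positivity, fun x hx b hb0 hb => ?_⟩
  have hb1 : b ≤ 1 := hb.trans (min_le_right _ _)
  have hbδ : b ≤ δ / 2 := hb.trans (min_le_left _ _)
  have hd : ∀ t ∈ Icc x (x + b), HasDerivWithinAt (fun t => t ^ p - p * x ^ (p - 1) * t)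
      (p * t ^ (p - 1) - p * x ^ (p - 1)) (Icc x (x + b)) t := by
    intro t _
    have h1 := Real.hasDerivAt_rpow_const (x := t) (p := p) (Or.inr hp.le)
    have h2 := (hasDerivAt_id t).const_mul (p * x ^ (p - 1))
    have h3 := (h1.sub h2).hasDerivWithinAt (s := Icc x (x + b))
    rw [mul_one] at h3
    exact h3
  have hbound : ∀ t ∈ Icc x (x + b), ‖p * t ^ (p - 1) - p * x ^ (p - 1)‖ ≤ ω := by
    intro t ht
    refine (h t ⟨by linarith [hx.1, ht.1], by linarith [hx.2, ht.2]⟩ x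
      ⟨hx.1, by linarith [hx.2]⟩ ?_).le
    rw [Real.dist_eq, abs_of_nonneg (by linarith [ht.1])]
    linarith [ht.2]
  have := (convex_Icc x (x + b)).norm_image_sub_le_of_norm_hasDerivWithin_le hd hbound
    (left_mem_Icc.2 (by linarith)) (right_mem_Icc.2 (by linarith))
  simp only [Real.norm_eq_abs, add_sub_cancel_left, abs_of_nonneg hb0] at this
  refine le_trans (le_of_eq ?_) this
  congr 1
  ring

/-- Logarithmic cutoff: `χ` rises from `0` near the origin to `1` on `[m, ∞)` with logarithmic
derivative `t χ'(t)` as small as desired. -/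
lemma exists_log_cutoff {δ m : ℝ} (hδ : 0 < δ) (hm : 0 < m) :
    ∃ (χ : ℝ → ℝ) (a : ℝ), 0 < a ∧ ContDiffOn ℝ 1 χ (Ioi 0) ∧ (∀ t ∈ Ioo 0 a, χ t = 0) ∧
      (∀ t, 0 ≤ χ t ∧ χ t ≤ 1) ∧ (∀ t, m ≤ t → χ t = 1) ∧
      ∀ t > 0, 0 ≤ t * deriv χ t ∧ t * deriv χ t ≤ δ := by
  have hS : ContDiff ℝ 1 Real.smoothTransition := Real.smoothTransition.contDiff
  have hSc : Continuous (deriv Real.smoothTransition) := hS.continuous_deriv le_rfl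
  have hS0 : ∀ s, 0 ≤ deriv Real.smoothTransition s := fun s =>
    Real.smoothTransition.monotone.deriv_nonneg
  obtain ⟨M, hM⟩ := isCompact_Icc.exists_bound_of_continuousOn (s := Icc (0 : ℝ) 1)
    hSc.continuousOn
  have hM0 : 0 ≤ M := (norm_nonneg _).trans (hM 0 ⟨le_rfl, zero_le_one⟩)
  have hSM : ∀ s, deriv Real.smoothTransition s ≤ M := by
    intro s
    rcases lt_or_ge s 0 with h | h
    · have : Real.smoothTransition =ᶠ[𝓝 s] fun _ => 0 := by
        filter_upwards [Iio_mem_nhds h] with t ht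
          using Real.smoothTransition.zero_of_nonpos (le_of_lt ht)
      rw [this.deriv_eq]; simpa using hM0
    rcases lt_or_ge 1 s with h' | h'
    · have : Real.smoothTransition =ᶠ[𝓝 s] fun _ => 1 := by
        filter_upwards [Ioi_mem_nhds h'] with t ht
          using Real.smoothTransition.one_of_one_le (le_of_lt ht)
      rw [this.deriv_eq]; simpa using hM0
    · exact (le_abs_self _).trans (hM s ⟨h, h'⟩)
  set k : ℝ := M / δ + |Real.log m| + 1 with hk
  have hk0 : 0 < k := by positivity
  have hder : ∀ t > 0, HasDerivAt (fun t => Real.smoothTransition (Real.log t / k + 2))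
      (deriv Real.smoothTransition (Real.log t / k + 2) * (t⁻¹ / k)) t := by
    intro t ht
    have h1 : HasDerivAt (fun t => Real.log t / k + 2) (t⁻¹ / k) t :=
      ((Real.hasDerivAt_log ht.ne').div_const k).add_const 2
    exact ((hS.differentiable one_ne_zero).differentiableAt.hasDerivAt).comp t h1
  refine ⟨fun t => Real.smoothTransition (Real.log t / k + 2), Real.exp (-(2 * k)),
    Real.exp_pos _, ?_, ?_, ?_, ?_, ?_⟩
  · refine hS.comp_contDiffOn (ContDiffOn.add (ContDiffOn.div_const ?_ k) contDiffOn_const)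
    exact fun t ht => (Real.contDiffAt_log.2 (ne_of_gt ht)).contDiffWithinAt
  · intro t ht
    apply Real.smoothTransition.zero_of_nonpos
    have : Real.log t ≤ -(2 * k) := by
      rw [Real.log_le_iff_le_exp ht.1]; exact ht.2.le
    have : Real.log t / k ≤ -2 := by rw [div_le_iff₀ hk0]; linarith
    linarith
  · exact fun t => ⟨Real.smoothTransition.nonneg _, Real.smoothTransition.le_one _⟩
  · intro t ht
    apply Real.smoothTransition.one_of_one_le
    have h1 : Real.log m ≤ Real.log t := Real.log_le_log hm ht
    have h2 := neg_abs_le (Real.log m)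
    have h3 : 0 ≤ M / δ := by positivity
    have : -1 ≤ Real.log t / k := by rw [le_div_iff₀ hk0]; linarith
    linarith
  · intro t ht
    have e : t * deriv (fun t => Real.smoothTransition (Real.log t / k + 2)) t
        = deriv Real.smoothTransition (Real.log t / k + 2) / k := by
      rw [(hder t ht).deriv]; field_simp
    rw [e]
    refine ⟨div_nonneg (hS0 _) hk0.le, ?_⟩
    rw [div_le_iff₀ hk0]
    refine (hSM _).trans ?_
    have : δ * k = M + δ * (|Real.log m| + 1) := by rw [hk]; field_simp; ring
    rw [this]
    have : 0 ≤ δ * (|Real.log m| + 1) := by positivity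
    linarith

/-- One-variable form of the energy density of `h(G)`, `h = t^{(p-1)/p} χ`: after subtracting the
contribution of the equation tested with `χ(G)^p`, it is a Taylor remainder, controlled by `χ'`. -/
lemma density_bound {p : ℝ} (hp : 1 < p) {ω δ : ℝ}
    (hδ : ∀ x ∈ Icc (0 : ℝ) 1, ∀ b, 0 ≤ b → b ≤ δ →
      |(x + b) ^ p - x ^ p - p * x ^ (p - 1) * b| ≤ ω * b)
    {χ : ℝ → ℝ} (hχ : ContDiffOn ℝ 1 χ (Ioi 0)) (h01 : ∀ t, 0 ≤ χ t ∧ χ t ≤ 1)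
    (hχd : ∀ t > 0, 0 ≤ t * deriv χ t ∧ t * deriv χ t ≤ δ) {t : ℝ} (ht : 0 < t) :
    |(|deriv (fun t => t ^ ((p - 1) / p) * χ t) t| ^ p - ((p - 1) / p) ^ p * χ t ^ p / t
      - ((p - 1) / p) ^ (p - 1) * deriv (fun t => χ t ^ p) t)| ≤ ω * deriv χ t := by
  have hp0 : 0 < p := by linarith
  set γ : ℝ := (p - 1) / p with hγ
  have hγ0 : 0 < γ := div_pos (by linarith) hp0
  have hγ1 : γ ≤ 1 := by rw [hγ, div_le_one hp0]; linarith
  have hd : HasDerivAt χ (deriv χ t) t :=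
    ((hχ.contDiffAt (Ioi_mem_nhds ht)).differentiableAt one_ne_zero).hasDerivAt
  have hh : HasDerivAt (fun t => t ^ γ * χ t)
      (γ * t ^ (γ - 1) * χ t + t ^ γ * deriv χ t) t :=
    (Real.hasDerivAt_rpow_const (Or.inl ht.ne')).mul hd
  have hF : HasDerivAt (fun t => χ t ^ p) (deriv χ t * p * χ t ^ (p - 1)) t :=
    hd.rpow_const (Or.inr hp.le)
  rw [hh.deriv, hF.deriv]
  obtain ⟨hb0, hb⟩ := hχd t ht
  set b := t * deriv χ t with hbdef
  obtain ⟨hc0, hc1⟩ := h01 t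
  have e1 : γ * t ^ (γ - 1) * χ t + t ^ γ * deriv χ t = t ^ (γ - 1) * (γ * χ t + b) := by
    have : t ^ γ = t ^ (γ - 1) * t := by
      rw [← Real.rpow_add_one ht.ne']; congr 1; ring
    rw [this, hbdef]; ring
  have e2 : |γ * t ^ (γ - 1) * χ t + t ^ γ * deriv χ t| ^ p = (γ * χ t + b) ^ p / t := by
    have hnn : 0 ≤ γ * χ t + b := by positivity
    rw [e1, abs_of_nonneg (by positivity), Real.mul_rpow (by positivity) hnn,
      ← Real.rpow_mul ht.le]
    have : (γ - 1) * p = -1 := by rw [hγ]; field_simp; ring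
    rw [this, Real.rpow_neg_one]; field_simp
  have key := hδ (γ * χ t) ⟨by positivity, by nlinarith⟩ b hb0 hb
  rw [Real.mul_rpow hγ0.le hc0, Real.mul_rpow hγ0.le hc0] at key
  rw [e2]
  have e3 : (γ * χ t + b) ^ p / t - γ ^ p * χ t ^ p / t
      - γ ^ (p - 1) * (deriv χ t * p * χ t ^ (p - 1))
      = ((γ * χ t + b) ^ p - γ ^ p * χ t ^ p - p * (γ ^ (p - 1) * χ t ^ (p - 1)) * b) / t := by
    rw [hbdef]; field_simp
  rw [e3, abs_div, abs_of_pos ht, div_le_iff₀ ht]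
  refine key.trans (le_of_eq ?_)
  rw [hbdef]; ring

/-! ### Energy of the truncated ground state -/

/-- The energy of `G^{(p-1)/p} χ(G)` is at most a constant independent of `χ` times `ω`, the
relative size of the Taylor remainder for increments up to the bound `δ` on `t χ'(t)`. -/
lemma energy_bound {Ω : Set E} (hΩ : IsOpen Ω) {p : ℝ} (hp : 1 < p)
    {A : E → Matrix (Fin n) (Fin n) ℝ} (hA : IsEllipticMatrix Ω A)
    {V φ G : E → ℝ} (hG : ContDiffOn ℝ 1 G Ω) (hφ : Continuous φ) (hφi : Integrable φ)
    (hVG : IntegrableOn (fun x => (p / (p - 1)) ^ (p - 1) * V x * G x ^ (p - 1)) Ω)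
    (hsol : IsWeakSolution A p (fun x => (p / (p - 1)) ^ (p - 1) * V x) φ Ω G)
    (hGpos : ∀ x ∈ Ω, 0 < G x) (hGinf : TendstoZeroAtInfinityIn Ω Ω G)
    {ω δ : ℝ} (hω : 0 < ω)
    (hδ : ∀ x ∈ Icc (0 : ℝ) 1, ∀ b, 0 ≤ b → b ≤ δ →
      |(x + b) ^ p - x ^ p - p * x ^ (p - 1) * b| ≤ ω * b)
    {χ : ℝ → ℝ} (hχ : ContDiffOn ℝ 1 χ (Ioi 0)) (h01 : ∀ t, 0 ≤ χ t ∧ χ t ≤ 1)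
    {a : ℝ} (ha : 0 < a) (hχa : ∀ t ∈ Ioo 0 a, χ t = 0)
    (hχd : ∀ t > 0, 0 ≤ t * deriv χ t ∧ t * deriv χ t ≤ δ)
    (hh : ContDiffOn ℝ 1 (fun t => t ^ ((p - 1) / p) * χ t) (Ioi 0)) :
    |∫ x in Ω, ((aNorm A x
        (gradient (Ω.indicator fun x => G x ^ ((p - 1) / p) * χ (G x)) x)) ^ p +
      (V x - (((p - 1) / p) ^ p * (aNorm A x (gradient G x) / G x) ^ p +
          ((p - 1) / p) ^ (p - 1) * φ x * G x ^ (1 - p))) *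
        |Ω.indicator (fun x => G x ^ ((p - 1) / p) * χ (G x)) x| ^ p)| ≤
    ω * ((∫ x in Ω, |φ x|) + ∫ x in Ω, |(p / (p - 1)) ^ (p - 1) * V x * G x ^ (p - 1)|) := by
  have hp0 : 0 < p := by linarith
  have hp1 : 0 < p - 1 := by linarith
  have hms := hΩ.measurableSet
  set γ : ℝ := (p - 1) / p with hγ
  set c : ℝ := (p / (p - 1)) ^ (p - 1) with hc
  have hγ0 : 0 < γ := div_pos hp1 hp0
  have hγc : γ ^ (p - 1) * c = 1 := by
    rw [hc, ← Real.mul_rpow hγ0.le (by positivity), hγ]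
    rw [div_mul_div_comm, mul_comm, div_self (by positivity), Real.one_rpow]
  set N : E → ℝ := fun x => aNorm A x (gradient G x) with hN
  have hN0 : ∀ x, 0 ≤ N x := fun x => Real.sqrt_nonneg _
  set h : ℝ → ℝ := fun t => t ^ γ * χ t with hhdef
  set F : ℝ → ℝ := fun t => χ t ^ p with hFdef
  have hF : ContDiffOn ℝ 1 F (Ioi 0) := by
    have : ContDiff ℝ ((1 : ℕ) : ℕ∞) fun t : ℝ => t ^ p :=
      Real.contDiff_rpow_const_of_le (by simpa using hp.le)
    exact (show ContDiff ℝ 1 fun t : ℝ => t ^ p by simpa using this).comp_contDiffOn hχ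
  have hFa : ∀ t ∈ Ioo 0 a, F t = 0 := fun t ht => by
    simp only [hFdef, hχa t ht, Real.zero_rpow hp0.ne']
  have hha : ∀ t ∈ Ioo 0 a, h t = 0 := fun t ht => by simp only [hhdef, hχa t ht, mul_zero]
  obtain ⟨-, -, -, hgrad⟩ := comp_G hΩ hG hGpos hGinf hh ha hha
  obtain ⟨iF, eF⟩ := identity_G hΩ hp hA hG hφ hVG hsol hGpos hGinf hF ha hFa
  obtain ⟨iχ, eχ⟩ := identity_G hΩ hp hA hG hφ hVG hsol hGpos hGinf hχ ha hχa
  have hGm : ∀ {f : ℝ → ℝ}, ContinuousOn f (Ioi 0) →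
      AEStronglyMeasurable (fun x => f (G x)) (volume.restrict Ω) := fun {f} hf =>
    (hf.comp hG.continuousOn fun x hx => hGpos x hx).aestronglyMeasurable hms
  have hNm : AEStronglyMeasurable (fun x => N x ^ p) (volume.restrict Ω) :=
    ((continuousOn_aNorm (hA.continuousOn hΩ) (continuousOn_gradient hΩ hG)).rpow_const
      fun _ _ => Or.inr hp0.le).aestronglyMeasurable hms
  -- `f(G)` with `0 ≤ f ≤ 1` is a bounded multiplier
  have hmul : ∀ {f : ℝ → ℝ} {g : E → ℝ}, ContinuousOn f (Ioi 0) → (∀ t, 0 ≤ f t ∧ f t ≤ 1) →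
      IntegrableOn g Ω → IntegrableOn (fun x => g x * f (G x)) Ω := by
    intro f g hf hf1 hg
    refine Integrable.mono hg (hg.aestronglyMeasurable.mul (hGm hf)) (Eventually.of_forall ?_)
    intro x
    rw [norm_mul, Real.norm_eq_abs (f _), abs_of_nonneg (hf1 _).1]
    exact mul_le_of_le_one_right (norm_nonneg _) (hf1 _).2
  have hF01 : ∀ t, 0 ≤ F t ∧ F t ≤ 1 := fun t =>
    ⟨Real.rpow_nonneg (h01 t).1 _, Real.rpow_le_one (h01 t).1 (h01 t).2 hp0.le⟩
  have hφΩ : IntegrableOn φ Ω := hφi.integrableOn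
  set D : ℝ → ℝ := fun t => |deriv h t| ^ p - γ ^ p * χ t ^ p / t - γ ^ (p - 1) * deriv F t
    with hD
  have hDb : ∀ t > 0, |D t| ≤ ω * deriv χ t := fun t ht => density_bound hp hδ hχ h01 hχd ht
  have hDc : ContinuousOn D (Ioi 0) := by
    have c1 := (hh.continuousOn_deriv_of_isOpen isOpen_Ioi le_rfl).abs.rpow_const
      (p := p) fun _ _ => Or.inr hp0.le
    have c2 : ContinuousOn (fun t => γ ^ p * χ t ^ p / t) (Ioi 0) :=
      (continuousOn_const.mul hF.continuousOn).div continuousOn_id fun t ht => ne_of_gt ht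
    exact (c1.sub c2).sub (continuousOn_const.mul
      (hF.continuousOn_deriv_of_isOpen isOpen_Ioi le_rfl))
  have hpt : ∀ x ∈ Ω, |D (G x) * N x ^ p| ≤ ω * (deriv χ (G x) * N x ^ p) := by
    intro x hx
    have hNp : 0 ≤ N x ^ p := Real.rpow_nonneg (hN0 x) _
    rw [abs_mul, abs_of_nonneg hNp, ← mul_assoc]
    exact mul_le_mul_of_nonneg_right (hDb _ (hGpos x hx)) hNp
  have iD : IntegrableOn (fun x => D (G x) * N x ^ p) Ω := by
    refine Integrable.mono' (iχ.const_mul ω) ((hGm hDc).mul hNm) ?_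
    filter_upwards [ae_restrict_mem hms] with x hx using hpt x hx
  have hE : ∀ x ∈ Ω, (aNorm A x
        (gradient (Ω.indicator fun x => G x ^ γ * χ (G x)) x)) ^ p +
      (V x - (γ ^ p * (N x / G x) ^ p + γ ^ (p - 1) * φ x * G x ^ (1 - p))) *
        |Ω.indicator (fun x => G x ^ γ * χ (G x)) x| ^ p =
      D (G x) * N x ^ p + γ ^ (p - 1) * (deriv F (G x) * N x ^ p +
        c * V x * G x ^ (p - 1) * F (G x) - φ x * F (G x)) := by
    intro x hx
    have hgx := hGpos x hx
    have hU : |Ω.indicator (fun x => G x ^ γ * χ (G x)) x| ^ p = G x ^ (p - 1) * F (G x) := by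
      rw [indicator_of_mem hx,
        abs_of_nonneg (mul_nonneg (Real.rpow_nonneg hgx.le _) (h01 _).1),
        Real.mul_rpow (Real.rpow_nonneg hgx.le _) (h01 _).1, ← Real.rpow_mul hgx.le]
      congr 2
      rw [hγ]; field_simp
    have hgr : aNorm A x (gradient (Ω.indicator fun x => G x ^ γ * χ (G x)) x) ^ p =
        |deriv h (G x)| ^ p * N x ^ p := by
      rw [hgrad x hx, aNorm_smul, Real.mul_rpow (abs_nonneg _) (hN0 x)]
    have q1 : (N x / G x) ^ p * G x ^ (p - 1) = N x ^ p / G x := by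
      rw [Real.div_rpow (hN0 x) hgx.le, Real.rpow_sub_one hgx.ne']
      have := (Real.rpow_pos_of_pos hgx p).ne'
      field_simp
    have q2 : G x ^ (1 - p) * G x ^ (p - 1) = 1 := by
      rw [← Real.rpow_add hgx]; simp
    rw [hU, hgr]
    simp only [hD]
    have q3 : χ (G x) ^ p = F (G x) := rfl
    rw [q3]
    linear_combination (-γ ^ p * F (G x)) * q1 - γ ^ (p - 1) * φ x * F (G x) * q2
      - V x * G x ^ (p - 1) * F (G x) * hγc
  rw [setIntegral_congr_fun hms hE]
  have i2 := hmul hF.continuousOn hF01 hVG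
  have i3 := hmul hF.continuousOn hF01 hφΩ
  have iF2 : IntegrableOn (fun x => deriv F (G x) * N x ^ p +
        c * V x * G x ^ (p - 1) * F (G x)) Ω := iF.add i2
  have hzero : ∫ x in Ω, γ ^ (p - 1) * (deriv F (G x) * N x ^ p +
        c * V x * G x ^ (p - 1) * F (G x) - φ x * F (G x)) = 0 := by
    rw [integral_const_mul, integral_sub iF2 i3, integral_add iF i2, eF, sub_self, mul_zero]
  have iR : IntegrableOn (fun x => γ ^ (p - 1) * (deriv F (G x) * N x ^ p +
        c * V x * G x ^ (p - 1) * F (G x) - φ x * F (G x))) Ω := (iF2.sub i3).const_mul _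
  rw [integral_add iD iR, hzero, add_zero]
  have j2 := hmul hχ.continuousOn h01 hVG
  have j3 := hmul hχ.continuousOn h01 hφΩ
  calc |∫ x in Ω, D (G x) * N x ^ p| ≤ ∫ x in Ω, |D (G x) * N x ^ p| := abs_integral_le_integral_abs
    _ ≤ ∫ x in Ω, ω * (deriv χ (G x) * N x ^ p) :=
        setIntegral_mono_on iD.abs (iχ.const_mul ω) hms hpt
    _ = ω * ((∫ x in Ω, φ x * χ (G x)) - ∫ x in Ω, c * V x * G x ^ (p - 1) * χ (G x)) := by
        rw [integral_const_mul, ← eχ, add_sub_cancel_right]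
    _ ≤ _ := by
        refine mul_le_mul_of_nonneg_left ?_ hω.le
        have b1 : (∫ x in Ω, φ x * χ (G x)) ≤ ∫ x in Ω, |φ x| := by
          refine setIntegral_mono_on j3 hφΩ.abs hms fun x _ => ?_
          refine (le_abs_self _).trans ?_
          rw [abs_mul, abs_of_nonneg (h01 (G x)).1]
          exact mul_le_of_le_one_right (abs_nonneg _) (h01 _).2
        have b2 : -(∫ x in Ω, c * V x * G x ^ (p - 1) * χ (G x)) ≤
            ∫ x in Ω, |c * V x * G x ^ (p - 1)| := by
          rw [← integral_neg]
          refine setIntegral_mono_on j2.neg hVG.abs hms fun x _ => ?_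
          refine (neg_le_abs _).trans ?_
          rw [abs_mul, abs_of_nonneg (h01 (G x)).1]
          exact mul_le_of_le_one_right (abs_nonneg _) (h01 _).2
        linarith

end Aux

theorem criticality_with_potential
    {n : ℕ} (hn : 2 ≤ n) (Ω : Set (EuclideanSpace ℝ (Fin n)))
    (hΩopen : IsOpen Ω) (hΩconn : IsConnected Ω)
    (p : ℝ) (hp : 1 < p)
    (A : EuclideanSpace ℝ (Fin n) → Matrix (Fin n) (Fin n) ℝ)
    (hA : IsEllipticMatrix Ω A)
    (V : EuclideanSpace ℝ (Fin n) → ℝ) (hV : InMorreyLoc p Ω V)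
    (hsub : IsSubcritical A p (fun x => (p / (p - 1)) ^ (p - 1) * V x) Ω)
    (φ : EuclideanSpace ℝ (Fin n) → ℝ) (hφ : IsTestFun Ω φ) (hφnonneg : ∀ x, 0 ≤ φ x)
    (hφne : ∃ x, φ x ≠ 0)
    (G : EuclideanSpace ℝ (Fin n) → ℝ) (α : ℝ) (hα : α ∈ Set.Ioc (0:ℝ) 1)
    (hG1 : IsC1Holder α Ω G) (hGpos : ∀ x ∈ Ω, 0 < G x)
    (hGsol : IsWeakSolution A p (fun x => (p / (p - 1)) ^ (p - 1) * V x) φ Ω G)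
    (hGinf : TendstoZeroAtInfinityIn Ω Ω G)
    (hVG : (∫ x in Ω, V x * G x ^ (p - 1)) < 0)
    (hVGfin : (∫⁻ x in Ω, ENNReal.ofReal (|V x| * G x ^ (p - 1))) < ⊤) :
    ∃ u : ℕ → EuclideanSpace ℝ (Fin n) → ℝ,
      IsNullSequence A p
        (fun x => V x - (((p - 1) / p) ^ p * (aNorm A x (gradient G x) / G x) ^ p +
          ((p - 1) / p) ^ (p - 1) * φ x * G x ^ (1 - p)))
        Ω u := by
  have hp0 : 0 < p := by linarith
  have hp1 : 0 < p - 1 := by linarith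
  have hms := hΩopen.measurableSet
  have hG := hG1.1
  have hGc : ContinuousOn G Ω := hG.continuousOn
  have hφc : Continuous φ := hφ.1.continuous
  have hφi : Integrable φ := hφc.integrable_of_hasCompactSupport hφ.2.1
  -- a nonzero Bochner integral forces integrability, hence measurability of `V` on `Ω`
  have hVi : IntegrableOn (fun x => V x * G x ^ (p - 1)) Ω :=
    not_imp_comm.1 integral_undef hVG.ne
  have hcVi : IntegrableOn (fun x => (p / (p - 1)) ^ (p - 1) * V x * G x ^ (p - 1)) Ω := by
    simpa only [IntegrableOn, mul_assoc] using Integrable.const_mul hVi ((p / (p - 1)) ^ (p - 1))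
  have hGr : ∀ r : ℝ, ContinuousOn (fun x => G x ^ r) Ω := fun r =>
    hGc.rpow_const fun x hx => Or.inl (hGpos x hx).ne'
  have hVeq : ∀ x ∈ Ω, V x * G x ^ (p - 1) * G x ^ (1 - p) = V x := fun x hx => by
    rw [mul_assoc, ← Real.rpow_add (hGpos x hx)]; simp
  have hVm : AEStronglyMeasurable V (volume.restrict Ω) := by
    refine (hVi.aestronglyMeasurable.mul ((hGr (1 - p)).aestronglyMeasurable hms)).congr ?_
    filter_upwards [ae_restrict_mem hms] with x hx using hVeq x hx
  have hVl : ∀ K ⊆ Ω, IsCompact K → IntegrableOn V K := fun K hKΩ hK =>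
    ((hVi.mono_set hKΩ).mul_continuousOn ((hGr (1 - p)).mono hKΩ) hK).congr_fun
      (fun x hx => hVeq x (hKΩ hx)) hK.measurableSet
  set W : EuclideanSpace ℝ (Fin n) → ℝ := fun x =>
    ((p - 1) / p) ^ p * (aNorm A x (gradient G x) / G x) ^ p +
          ((p - 1) / p) ^ (p - 1) * φ x * G x ^ (1 - p) with hW
  have hWc : ContinuousOn W Ω := by
    have hNc : ContinuousOn (fun x => aNorm A x (gradient G x)) Ω :=
      continuousOn_aNorm (hA.continuousOn hΩopen) (continuousOn_gradient hΩopen hG)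
    refine ContinuousOn.add (continuousOn_const.mul ?_)
      ((continuousOn_const.mul hφc.continuousOn).mul (hGr _))
    exact (hNc.div hGc fun x hx => (hGpos x hx).ne').rpow_const fun _ _ => Or.inr hp0.le
  have hPm : AEStronglyMeasurable (fun x => V x - W x) (volume.restrict Ω) :=
    hVm.sub (hWc.aestronglyMeasurable hms)
  have hPl : ∀ K ⊆ Ω, IsCompact K → IntegrableOn (fun x => V x - W x) K := fun K hKΩ hK =>
    (hVl K hKΩ hK).sub ((hWc.mono hKΩ).integrableOn_compact hK)
  -- the ball on which the mass of the null-sequence is controlled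
  obtain ⟨x₀, hx₀⟩ := hΩconn.nonempty
  obtain ⟨r, hr, hrΩ⟩ := Metric.nhds_basis_closedBall.mem_iff.1 (hΩopen.mem_nhds hx₀)
  have hKb : IsCompact (Metric.closedBall x₀ r) := isCompact_closedBall x₀ r
  have hKne : (Metric.closedBall x₀ r).Nonempty := ⟨x₀, Metric.mem_closedBall_self hr.le⟩
  obtain ⟨y₁, hy₁, hmin⟩ := hKb.exists_isMinOn hKne (hGc.mono hrΩ)
  obtain ⟨y₂, hy₂, hmax⟩ := hKb.exists_isMaxOn hKne (hGc.mono hrΩ)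
  have hm : 0 < G y₁ := hGpos _ (hrΩ hy₁)
  set γ : ℝ := (p - 1) / p with hγ
  have hγ0 : 0 < γ := div_pos hp1 hp0
  set d : ℝ := G y₁ ^ γ / 2 with hd
  have hd0 : 0 < d := by positivity
  set C₀ : ℝ := (∫ x in Ω, |φ x|) + ∫ x in Ω, |(p / (p - 1)) ^ (p - 1) * V x * G x ^ (p - 1)|
    with hC₀
  have hC₀0 : 0 ≤ C₀ := add_nonneg (integral_nonneg fun _ => abs_nonneg _)
    (integral_nonneg fun _ => abs_nonneg _)
  have key : ∀ k : ℕ, ∃ u : EuclideanSpace ℝ (Fin n) → ℝ, IsTestFun Ω u ∧ (∀ x, 0 ≤ u x) ∧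
      (∀ x ∈ Metric.closedBall x₀ r, |u x - G x ^ γ| < d) ∧
      |∫ x in Ω, ((aNorm A x (gradient u x)) ^ p + (V x - W x) * |u x| ^ p)| ≤
        1 / ((k : ℝ) + 1) := by
    intro k
    have hε : (0 : ℝ) < 1 / ((k : ℝ) + 1) := by positivity
    set ε : ℝ := 1 / ((k : ℝ) + 1)
    have hω : 0 < ε / (2 * (C₀ + 1)) := by positivity
    obtain ⟨δ, hδ0, hδ⟩ := rpow_remainder hp hω
    obtain ⟨χ, a, ha, hχ, hχa, h01, hχ1, hχd⟩ := exists_log_cutoff hδ0 hm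
    have hh : ContDiffOn ℝ 1 (fun t => t ^ γ * χ t) (Ioi 0) := by
      refine ContDiffOn.mul (fun t ht => ?_) hχ
      exact (Real.contDiffAt_rpow_const_of_ne (ne_of_gt ht)).contDiffWithinAt
    have hha : ∀ t ∈ Ioo 0 a, t ^ γ * χ t = 0 := fun t ht => by rw [hχa t ht, mul_zero]
    have hb := energy_bound hΩopen hp hA hG hφc hφi hcVi hGsol hGpos hGinf hω hδ hχ h01 ha hχa
      hχd hh
    obtain ⟨g1, g2, g3, -⟩ := comp_G hΩopen hG hGpos hGinf hh ha hha
    have hU0 : ∀ x, 0 ≤ Ω.indicator (fun x => G x ^ γ * χ (G x)) x := fun x =>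
      indicator_nonneg (fun y hy => mul_nonneg (Real.rpow_nonneg (hGpos y hy).le _) (h01 _).1) x
    obtain ⟨u, hu, hu0, hud, hue⟩ := exists_testFun_energy hΩopen hp hA hPm hPl g1 g2 g3 hU0
      (half_pos hε) hd0
    refine ⟨u, hu, hu0, fun x hx => ?_, ?_⟩
    · have := hud x
      rwa [indicator_of_mem (hrΩ hx), hχ1 _ (hmin hx), mul_one] at this
    · have h1 : ε / (2 * (C₀ + 1)) * C₀ ≤ ε / 2 := by
        rw [div_mul_eq_mul_div, div_le_div_iff₀ (by positivity) two_pos]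
        nlinarith
      have h2 := abs_le.1 (hb.trans h1)
      have h3 := abs_lt.1 hue
      exact abs_le.2 ⟨by linarith [h2.1, h3.1], by linarith [h2.2, h3.2]⟩
  choose u hu hu0 hud hue using key
  refine ⟨u, hu, hu0, ⟨Metric.ball x₀ r, Metric.isOpen_ball, ⟨x₀, Metric.mem_ball_self hr⟩,
    ?_, ?_, ?_⟩, ?_⟩
  · rwa [closure_ball x₀ hr.ne']
  · rwa [closure_ball x₀ hr.ne']
  · set v : ℝ := volume.real (Metric.ball x₀ r) with hv
    have hv0 : 0 < v := ENNReal.toReal_pos (Metric.measure_ball_pos volume x₀ hr).ne'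
      measure_ball_lt_top.ne
    set R : ℝ := G y₂ ^ γ + d with hR
    have hR0 : 0 < R := add_pos (Real.rpow_pos_of_pos (hGpos _ (hrΩ hy₂)) _) hd0
    refine ⟨min (d ^ p * v) (R ^ p * v)⁻¹, by positivity, fun k => ?_⟩
    have hlo : ∀ x ∈ Metric.ball x₀ r, d ^ p ≤ u k x ^ p := by
      intro x hx
      have hx' := Metric.ball_subset_closedBall hx
      have h1 := (abs_lt.1 (hud k x hx')).1
      have h2 : G y₁ ^ γ ≤ G x ^ γ := Real.rpow_le_rpow hm.le (hmin hx') hγ0.le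
      exact Real.rpow_le_rpow hd0.le (by linarith) hp0.le
    have hhi : ∀ x ∈ Metric.ball x₀ r, u k x ^ p ≤ R ^ p := by
      intro x hx
      have hx' := Metric.ball_subset_closedBall hx
      have h1 := (abs_lt.1 (hud k x hx')).2
      have h2 : G x ^ γ ≤ G y₂ ^ γ :=
        Real.rpow_le_rpow (hGpos _ (hrΩ hx')).le (hmax hx') hγ0.le
      exact Real.rpow_le_rpow (hu0 k x) (by linarith) hp0.le
    have hcst : ∀ s : ℝ, IntegrableOn (fun _ : EuclideanSpace ℝ (Fin n) => s)
        (Metric.ball x₀ r) := fun s => integrableOn_const measure_ball_lt_top.ne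
    have hui : IntegrableOn (fun x => u k x ^ p) (Metric.ball x₀ r) :=
      (((hu k).1.continuous.rpow_const fun _ => Or.inr hp0.le).continuousOn.integrableOn_compact
        hKb).mono_set Metric.ball_subset_closedBall
    have i1 := setIntegral_mono_on (hcst (d ^ p)) hui measurableSet_ball hlo
    have i2 := setIntegral_mono_on hui (hcst (R ^ p)) measurableSet_ball hhi
    rw [setIntegral_const, smul_eq_mul, mul_comm] at i1 i2
    refine ⟨(min_le_left _ _).trans i1, i2.trans ?_⟩
    rw [le_inv_comm₀ (by positivity) (by positivity)]
    exact min_le_right _ _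
  · exact squeeze_zero_norm hue tendsto_one_div_add_atTop_nhds_zero_nat
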